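/- Suppose F satisfies (G1) and (G2). Then for every positive measure μ ∈ L_θ^+ with a disintegration ω, and for the path Γ^ω_{F^{*n}μ} representing F^{*n}μ obtained by iterating the transfer formula starting from ω, it holds for all n ≥ 1 that |Γ^ω_{F^{*n}μ}|_θ^ω ≤ θ^n |μ|_θ^ω + (C₁/(1−θ)) ‖μ‖_∞, where C₁ = max{Hθ + θN|g|_θ, 2}. Consequently, taking the infimum over disintegrations, |F^{*n}μ|_θ ≤ θ^n |μ|_θ + (C₁/(1−θ)) ‖μ‖_∞ for all n ≥ 1. -/

import Mathlib

open MeasureTheory ENNReal Set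

namespace RDS

/-- The one-sided subshift of finite type `Σ_A^+` determined by the 0-1 matrix `A`. -/
abbrev SigmaA (N : ℕ) (A : Fin N → Fin N → Bool) :=
  {x : ℕ → Fin N // ∀ i, A (x i) (x (i + 1)) = true}

variable {N : ℕ} {A : Fin N → Fin N → Bool}

/-- The shift map `σ` on `Σ_A^+`. -/
def shift (x : SigmaA N A) : SigmaA N A :=
  ⟨fun i => x.val (i + 1), fun i => x.prop (i + 1)⟩

/-- Aperiodicity of a 0-1 matrix: some power has all entries positive. -/
def Aperiodic (A : Fin N → Fin N → Bool) : Prop :=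
  ∃ k : ℕ, 0 < k ∧ ∀ i j,
    0 < ((Matrix.of fun a b => if A a b then (1 : ℕ) else 0) ^ k) i j

/-- The metric `d_θ(x,y) = Σ_i θ^i (1 - δ(x_i, y_i))` on `Σ_A^+`. -/
noncomputable def dTheta (θ : ℝ) (x y : SigmaA N A) : ℝ :=
  ∑' i : ℕ, θ ^ i * (if x.val i = y.val i then (0 : ℝ) else 1)

/-- Cylinder sets of `Σ_A^+`. -/
def cylinder (n : ℕ) (w : Fin (n + 1) → Fin N) : Set (SigmaA N A) :=
  {x | ∀ i : Fin (n + 1), x.val i = w i}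

/-- `m` is a Markov measure on `Σ_A^+` compatible with `A`: it is given on
cylinders by a stochastic matrix `P` (vanishing where `A` vanishes) and a
stationary probability vector `p`. -/
def IsMarkov (m : Measure (SigmaA N A)) : Prop :=
  ∃ (p : Fin N → ℝ≥0∞) (P : Fin N → Fin N → ℝ≥0∞),
    (∑ i, p i = 1) ∧ (∀ i, ∑ j, P i j = 1) ∧ (∀ j, ∑ i, p i * P i j = p j) ∧
    (∀ i j, A i j = false → P i j = 0) ∧
    ∀ (n : ℕ) (w : Fin (n + 1) → Fin N),
      m (cylinder n w) = p (w 0) * ∏ i : Fin n, P (w i.castSucc) (w i.succ)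

/-- `σ_i⁻¹(γ)`: the sequence `γ` with the symbol `i` prepended
(defined when `A i γ₀ = 1`), i.e. the inverse branch of the restriction `σ_i`
of `σ` to the cylinder `[i]`. -/
def prepend (i : Fin N) (x : SigmaA N A) (h : A i (x.val 0) = true) : SigmaA N A :=
  ⟨fun n => match n with
    | 0 => i
    | Nat.succ k => x.val k,
   fun j => match j with
    | 0 => h
    | Nat.succ k => x.prop k⟩

/-- `f` is `L`-Lipschitz with respect to the distance function `d`. -/
def LipWithD {X : Type*} (d : X → X → ℝ) (L : ℝ) (f : X → ℝ) : Prop :=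
  ∀ x y, |f x - f y| ≤ L * d x y

/-- `f` is Lipschitz with respect to the distance function `d`. -/
def LipD {X : Type*} (d : X → X → ℝ) (f : X → ℝ) : Prop :=
  ∃ L : ℝ, LipWithD d L f

/-- The best Lipschitz constant of `f` with respect to `d` (valued in `ℝ≥0∞`). -/
noncomputable def lipConst {X : Type*} (d : X → X → ℝ) (f : X → ℝ) : ℝ≥0∞ :=
  ⨆ (x : X) (y : X), ENNReal.ofReal (|f x - f y| / d x y)

/-- The sup norm of `f` (valued in `ℝ≥0∞`). -/
noncomputable def supNormE {X : Type*} (f : X → ℝ) : ℝ≥0∞ :=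
  ⨆ x : X, ENNReal.ofReal |f x|

/-- The norm `‖f‖_θ = ‖f‖_∞ + Lip_d(f)`. -/
noncomputable def thetaNorm {X : Type*} (d : X → X → ℝ) (f : X → ℝ) : ℝ≥0∞ :=
  supNormE f + lipConst d f

/-- The Perron-Frobenius operator duality characterizing `P_σ`:
`∫ P_σ(φ) · ψ dm = ∫ φ · (ψ ∘ σ) dm` for integrable `φ` and bounded measurable `ψ`. -/
def IsPerronFrobenius (m : Measure (SigmaA N A))
    (Pσ : (SigmaA N A → ℝ) → SigmaA N A → ℝ) : Prop :=
  ∀ φ ψ : SigmaA N A → ℝ, Integrable φ m → Measurable ψ → (∃ C, ∀ x, |ψ x| ≤ C) →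
    ∫ x, Pσ φ x * ψ x ∂m = ∫ x, φ x * ψ (shift x) ∂m

/-- Spectral gap for `P_σ` on `d_θ`-Lipschitz functions with constants `D`, `r`:
`‖P_σ^n φ‖_θ ≤ D r^n ‖φ‖_θ` for all `n` and all `d_θ`-Lipschitz `φ` with
`∫ φ dm = 0`. -/
def HasGap (m : Measure (SigmaA N A)) (θ : ℝ)
    (Pσ : (SigmaA N A → ℝ) → SigmaA N A → ℝ) (D r : ℝ) : Prop :=
  ∀ φ : SigmaA N A → ℝ, LipD (dTheta θ) φ → (∫ x, φ x ∂m) = 0 →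
    ∀ n : ℕ, thetaNorm (dTheta θ) (Pσ^[n] φ) ≤
      ENNReal.ofReal (D * r ^ n) * thetaNorm (dTheta θ) φ

/-- `Jm i` is the Jacobian `J_{m,σ_i}` of `m` with respect to the branch `σ_i`
(the restriction of `σ` to the cylinder `[i]`): `m (σ_i(E)) = ∫_E J_{m,σ_i} dm`
for every measurable `E` (intersected with `[i]`). -/
def IsJacobian (m : Measure (SigmaA N A)) (Jm : Fin N → SigmaA N A → ℝ) : Prop :=
  ∀ (i : Fin N) (E : Set (SigmaA N A)), MeasurableSet E →
    m {γ : SigmaA N A | ∃ h : A i (γ.val 0) = true, prepend i γ h ∈ E} =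
      ∫⁻ x in E ∩ {x : SigmaA N A | x.val 0 = i}, ENNReal.ofReal (Jm i x) ∂m

variable {K : Type*} [MetricSpace K] [MeasurableSpace K]

/-- The Wasserstein-Kantorovich like distance `W(ν₁,ν₂)`: the supremum of
`|∫ g dν₁ - ∫ g dν₂|` over `g : K → ℝ` with `Lip(g) ≤ 1` and `‖g‖_∞ ≤ 1`.
Applied with `ν₂ = 0` it gives the norm `‖ν₁‖_W`; applied to the two parts of a
decomposition of a signed measure it gives its `‖·‖_W` norm. -/
noncomputable def wDist (ν₁ ν₂ : Measure K) : ℝ≥0∞ :=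
  ⨆ g : {g : K → ℝ // LipschitzWith 1 g ∧ ∀ z, |g z| ≤ 1},
    ENNReal.ofReal |∫ z, g.val z ∂ν₁ - ∫ z, g.val z ∂ν₂|

/-- The skew product `F(x,z) = (σ(x), G(x,z))`. -/
def skew (G : SigmaA N A × K → K) (p : SigmaA N A × K) : SigmaA N A × K :=
  (shift p.1, G p)

/-- The transfer operator `F^* μ (E) = μ (F⁻¹ E)` acting on signed measures. -/
noncomputable def transfer (G : SigmaA N A × K → K)
    (μ : SignedMeasure (SigmaA N A × K)) : SignedMeasure (SigmaA N A × K) :=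
  μ.map (skew G)

/-- Condition (G1): uniform contraction of the vertical fibers with rate `α`. -/
def CondG1 (G : SigmaA N A × K → K) (α : ℝ) : Prop :=
  ∀ (x : SigmaA N A) (z₁ z₂ : K), dist (G (x, z₁)) (G (x, z₂)) ≤ α * dist z₁ z₂

/-- Condition (G2): `x ↦ G(x,z)` is `d_θ`-Lipschitz with constant `H`,
uniformly in `z`. -/
def CondG2 (θ : ℝ) (G : SigmaA N A × K → K) (H : ℝ) : Prop :=
  ∀ (z : K) (x y : SigmaA N A), dist (G (x, z)) (G (y, z)) ≤ H * dTheta θ x y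

/-- `T` is (the path `γ ↦ μ|_γ` of) a disintegration of `μ` along the vertical
fibers, over the reference measure `m`: `μ(E) = ∫ (μ|_γ)(E ∩ γ) dm(γ)`. -/
def IsDisint (m : Measure (SigmaA N A)) (μ : Measure (SigmaA N A × K))
    (T : SigmaA N A → Measure K) : Prop :=
  (∀ E : Set (SigmaA N A × K), MeasurableSet E →
      μ E = ∫⁻ γ, T γ {z | (γ, z) ∈ E} ∂m) ∧
  ∀ E : Set K, MeasurableSet E → Measurable fun γ => T γ E

/-- The (essential) `‖·‖_W`-Lipschitz constant of a path of measures,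
`|Γ|_θ^ω = ess sup_{γ₁ ≠ γ₂} ‖Γ(γ₁) - Γ(γ₂)‖_W / d_θ(γ₁,γ₂)`. -/
noncomputable def pathLip (m : Measure (SigmaA N A)) (θ : ℝ)
    (T : SigmaA N A → Measure K) : ℝ≥0∞ :=
  essSup (fun p : SigmaA N A × SigmaA N A =>
    wDist (T p.1) (T p.2) / ENNReal.ofReal (dTheta θ p.1 p.2)) (m.prod m)

/-- The Lipschitz constant `|μ|_θ` of a positive measure: the infimum over
disintegrations `ω` of `μ` of `|μ|_θ^ω`. -/
noncomputable def lipDisint (m : Measure (SigmaA N A)) (θ : ℝ)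
    (μ : Measure (SigmaA N A × K)) : ℝ≥0∞ :=
  ⨅ T : {T : SigmaA N A → Measure K // IsDisint m μ T}, pathLip m θ T.val

/-- The fiberwise transfer formula: the path representing `F^*μ` induced by the
path `T` representing `μ`, i.e.
`γ ↦ Σ_i 1_{σ([i])}(γ) (F_{iγ})_*(T(iγ)) / J_{m,σ_i}(iγ)`. -/
noncomputable def transferPath (G : SigmaA N A × K → K) (Jm : Fin N → SigmaA N A → ℝ)
    (T : SigmaA N A → Measure K) : SigmaA N A → Measure K :=
  fun γ => ∑ i : Fin N, if h : A i (γ.val 0) = true then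
      ENNReal.ofReal ((Jm i (prepend i γ h))⁻¹) •
        ((T (prepend i γ h)).map fun z => G (prepend i γ h, z))
    else 0

variable [BorelSpace K] [CompactSpace K] [Nonempty K]

/-- The fiberwise restriction `μ|_γ = π₂_* (φ₁(γ) μ_γ)` of a finite positive
measure `μ` on `Σ_A^+ × K`, where `({μ_γ}_γ, φ₁ m)` is the Rokhlin
disintegration of `μ` along the vertical fibers and `φ₁ = d(π₁_*μ)/dm`. -/
noncomputable def fiberR (m : Measure (SigmaA N A))
    (μ : Measure (SigmaA N A × K)) (γ : SigmaA N A) : Measure K := by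
  by_cases h : IsFiniteMeasure μ
  · haveI := h
    exact (μ.fst.rnDeriv m γ) • μ.condKernel γ
  · exact 0

/-- The norm `‖μ‖_∞ = ess sup_γ ‖μ|_γ‖_W` of a signed measure written as a
difference `μ = μ₁ - μ₂` of positive measures. -/
noncomputable def infNormPair (m : Measure (SigmaA N A))
    (μ₁ μ₂ : Measure (SigmaA N A × K)) : ℝ≥0∞ :=
  essSup (fun γ => wDist (fiberR m μ₁ γ) (fiberR m μ₂ γ)) m

/-- The marginal density `φ₁ = d(π₁_*μ)/dm` of the signed measure `μ = μ₁ - μ₂`. -/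
noncomputable def phiPair (m : Measure (SigmaA N A))
    (μ₁ μ₂ : Measure (SigmaA N A × K)) (γ : SigmaA N A) : ℝ :=
  (μ₁.fst.rnDeriv m γ).toReal - (μ₂.fst.rnDeriv m γ).toReal

/-- Membership in `AB`: both parts are finite with first marginal absolutely
continuous with respect to `m`. -/
def MemABPair (m : Measure (SigmaA N A)) (μ₁ μ₂ : Measure (SigmaA N A × K)) : Prop :=
  μ₁.fst ≪ m ∧ μ₂.fst ≪ m ∧ IsFiniteMeasure μ₁ ∧ IsFiniteMeasure μ₂

/-- Membership in `S^∞`: `μ ∈ AB`, `‖μ‖_∞ < ∞` and the marginal density `φ₁`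
has a `d_θ`-Lipschitz version. -/
def MemSPair (m : Measure (SigmaA N A)) (θ : ℝ)
    (μ₁ μ₂ : Measure (SigmaA N A × K)) : Prop :=
  MemABPair m μ₁ μ₂ ∧ infNormPair m μ₁ μ₂ < ⊤ ∧
    ∃ ψ : SigmaA N A → ℝ, ψ =ᵐ[m] phiPair m μ₁ μ₂ ∧ LipD (dTheta θ) ψ

/-- `‖φ₁‖_θ`, computed on the best version of the marginal density. -/
noncomputable def thetaNormMu (m : Measure (SigmaA N A)) (θ : ℝ)
    (μ₁ μ₂ : Measure (SigmaA N A × K)) : ℝ≥0∞ :=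
  ⨅ ψ : {ψ : SigmaA N A → ℝ // ψ =ᵐ[m] phiPair m μ₁ μ₂}, thetaNorm (dTheta θ) ψ.val

/-- The norm `‖μ‖_{S^∞} = ‖φ₁‖_θ + ‖μ‖_∞`. -/
noncomputable def sNormPair (m : Measure (SigmaA N A)) (θ : ℝ)
    (μ₁ μ₂ : Measure (SigmaA N A × K)) : ℝ≥0∞ :=
  thetaNormMu m θ μ₁ μ₂ + infNormPair m μ₁ μ₂

/-- Positive part of a signed measure. -/
noncomputable def jPos {X : Type*} [MeasurableSpace X] (μ : SignedMeasure X) : Measure X :=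
  μ.toJordanDecomposition.posPart

/-- Negative part of a signed measure. -/
noncomputable def jNeg {X : Type*} [MeasurableSpace X] (μ : SignedMeasure X) : Measure X :=
  μ.toJordanDecomposition.negPart

/-- Membership in `AB` for signed measures. -/
def MemAB (m : Measure (SigmaA N A)) (μ : SignedMeasure (SigmaA N A × K)) : Prop :=
  MemABPair m (jPos μ) (jNeg μ)

/-- Membership in `S^∞` for signed measures. -/
def MemS (m : Measure (SigmaA N A)) (θ : ℝ) (μ : SignedMeasure (SigmaA N A × K)) : Prop :=
  MemSPair m θ (jPos μ) (jNeg μ)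

/-- `‖μ‖_∞` for signed measures. -/
noncomputable def infNorm (m : Measure (SigmaA N A))
    (μ : SignedMeasure (SigmaA N A × K)) : ℝ≥0∞ :=
  infNormPair m (jPos μ) (jNeg μ)

/-- `‖μ‖_{S^∞}` for signed measures. -/
noncomputable def sNorm (m : Measure (SigmaA N A)) (θ : ℝ)
    (μ : SignedMeasure (SigmaA N A × K)) : ℝ≥0∞ :=
  sNormPair m θ (jPos μ) (jNeg μ)

/-- `‖φ₁‖_∞` of the marginal density of a signed measure. -/
noncomputable def phiSup (m : Measure (SigmaA N A))
    (μ : SignedMeasure (SigmaA N A × K)) : ℝ≥0∞ :=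
  essSup (fun γ => ENNReal.ofReal |phiPair m (jPos μ) (jNeg μ) γ|) m

/-!
For two points with the same first symbol, compare the transferred fibres branch by branch: moving
along the path costs `θ L` because prepending a symbol contracts `d_θ` by `θ`, changing the fibre
map costs `H θ ‖T‖_∞`, and changing the weight costs `θ |g|_θ ‖T‖_∞` in each of the `N` branches.
Points with different first symbols are at distance at least `1`, and there the two masses, each at
most `‖T‖_∞`, suffice. The weights `1 / J` sum to `1` almost everywhere, so one application of the
transfer formula does not increase `‖T‖_∞` and gives `L ↦ θ L + C₁ ‖T‖_∞`; iterate and sum the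
geometric series.
-/

/-! ### The metric `d_θ` -/

section Metric

variable {θ : ℝ}

lemma summable_dTheta (h0 : 0 ≤ θ) (h1 : θ < 1) (x y : SigmaA N A) :
    Summable fun i : ℕ => θ ^ i * (if x.val i = y.val i then (0 : ℝ) else 1) := by
  refine Summable.of_nonneg_of_le (fun i => by positivity) (fun i => ?_)
    (summable_geometric_of_lt_one h0 h1)
  exact mul_le_of_le_one_right (pow_nonneg h0 i) (by split_ifs <;> norm_num)

lemma dTheta_nonneg (h0 : 0 ≤ θ) (x y : SigmaA N A) : 0 ≤ dTheta θ x y :=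
  tsum_nonneg fun i => by positivity

lemma dTheta_self (θ : ℝ) (x : SigmaA N A) : dTheta θ x x = 0 := by
  simp [dTheta]

lemma dTheta_pos (h0 : 0 < θ) (h1 : θ < 1) {x y : SigmaA N A} (h : x ≠ y) :
    0 < dTheta θ x y := by
  obtain ⟨i, hi⟩ : ∃ i, x.val i ≠ y.val i := Function.ne_iff.1 (Subtype.coe_ne_coe.2 h)
  refine (summable_dTheta h0.le h1 x y).tsum_pos (fun j => by positivity) i ?_
  rw [if_neg hi, mul_one]
  exact pow_pos h0 i

lemma one_le_dTheta (h0 : 0 ≤ θ) (h1 : θ < 1) {x y : SigmaA N A} (h : x.val 0 ≠ y.val 0) :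
    1 ≤ dTheta θ x y := by
  have hterm := (summable_dTheta h0 h1 x y).le_tsum 0 fun i _ => by positivity
  rwa [pow_zero, one_mul, if_neg h] at hterm

lemma dTheta_prepend (h0 : 0 ≤ θ) (h1 : θ < 1) (i : Fin N) (x y : SigmaA N A)
    (hx : A i (x.val 0) = true) (hy : A i (y.val 0) = true) :
    dTheta θ (prepend i x hx) (prepend i y hy) = θ * dTheta θ x y := by
  unfold dTheta
  rw [(summable_dTheta h0 h1 _ _).tsum_eq_zero_add, ← tsum_mul_left]
  simp only [prepend, if_true, mul_zero, zero_add]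
  refine tsum_congr fun n => ?_
  rw [pow_succ', mul_assoc]
  rfl

lemma continuous_dTheta_left (h0 : 0 ≤ θ) (h1 : θ < 1) (x : SigmaA N A) :
    Continuous fun y => dTheta θ y x := by
  refine continuous_tsum (u := fun i => θ ^ i) (fun i => ?_)
    (summable_geometric_of_lt_one h0 h1) (fun i y => ?_)
  · have hsymbol : Continuous fun a : Fin N => θ ^ i * (if a = x.val i then (0 : ℝ) else 1) :=
      continuous_of_discreteTopology
    exact hsymbol.comp ((continuous_apply i).comp continuous_subtype_val)
  · rw [Real.norm_of_nonneg (by positivity)]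
    exact mul_le_of_le_one_right (pow_nonneg h0 i) (by split_ifs <;> norm_num)

lemma LipWithD.continuous (h0 : 0 ≤ θ) (h1 : θ < 1) {L : ℝ} {f : SigmaA N A → ℝ}
    (hf : LipWithD (dTheta θ) L f) : Continuous f := by
  refine continuous_iff_continuousAt.2 fun x => ?_
  have hbound := ((continuous_dTheta_left h0 h1 x).const_mul L).tendsto x
  simp only [dTheta_self, mul_zero] at hbound
  exact tendsto_iff_dist_tendsto_zero.2
    (squeeze_zero (fun _ => dist_nonneg) (fun y => hf y x) hbound)

end Metric

/-! ### Inverse branches of the shift -/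

section Branch

lemma measurable_coord (n : ℕ) : Measurable fun x : SigmaA N A => x.val n :=
  (measurable_pi_apply n).comp measurable_subtype_coe

lemma measurable_shift : Measurable (shift : SigmaA N A → SigmaA N A) :=
  (measurable_pi_iff.2 fun n => measurable_coord (n + 1)).subtype_mk

lemma measurableSet_head_eq (i : Fin N) : MeasurableSet {x : SigmaA N A | x.val 0 = i} :=
  measurable_coord 0 (measurableSet_singleton i)

/-- The image `σ([i])` of the cylinder `[i]`: the sequences to which `i` can be prepended. -/
def branchDomain (i : Fin N) : Set (SigmaA N A) :=
  {x | A i (x.val 0) = true}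

/-- The inverse branch `γ ↦ iγ` of the shift, extended by the identity outside `σ([i])` so that it
is a total map. -/
def branch (i : Fin N) (x : SigmaA N A) : SigmaA N A :=
  if h : A i (x.val 0) = true then prepend i x h else x

lemma branch_of_mem {i : Fin N} {x : SigmaA N A} (h : x ∈ branchDomain i) :
    branch i x = prepend i x h :=
  dif_pos h

lemma shift_branch {i : Fin N} {x : SigmaA N A} (h : x ∈ branchDomain i) :
    shift (branch i x) = x := by
  rw [branch_of_mem h]; rfl

lemma shift_mem_branchDomain (x : SigmaA N A) : shift x ∈ branchDomain (x.val 0) :=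
  x.prop 0

lemma branch_shift (x : SigmaA N A) : branch (x.val 0) (shift x) = x := by
  rw [branch_of_mem (shift_mem_branchDomain x)]
  ext n
  cases n <;> rfl

lemma dTheta_branch {θ : ℝ} (h0 : 0 ≤ θ) (h1 : θ < 1) {i : Fin N} {x y : SigmaA N A}
    (hx : x ∈ branchDomain i) (hy : y ∈ branchDomain i) :
    dTheta θ (branch i x) (branch i y) = θ * dTheta θ x y := by
  rw [branch_of_mem hx, branch_of_mem hy]
  exact dTheta_prepend h0 h1 i x y hx hy

lemma measurableSet_branchDomain (i : Fin N) :
    MeasurableSet (branchDomain i : Set (SigmaA N A)) :=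
  measurable_coord 0 (MeasurableSet.of_discrete (s := {a : Fin N | A i a = true}))

lemma measurable_branch (i : Fin N) : Measurable (branch i : SigmaA N A → SigmaA N A) := by
  have hprepend : Measurable fun x : (branchDomain i : Set (SigmaA N A)) => prepend i x.1 x.2 := by
    refine (measurable_pi_iff.2 fun n => ?_).subtype_mk
    cases n with
    | zero => exact measurable_const
    | succ n => exact (measurable_coord n).comp measurable_subtype_coe
  let (x : SigmaA N A) : Decidable (x ∈ branchDomain i) :=
    inferInstanceAs (Decidable (A i (x.val 0) = true))
  exact hprepend.dite measurable_subtype_coe (measurableSet_branchDomain i)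

lemma setOf_exists_prepend_mem (i : Fin N) (E : Set (SigmaA N A)) :
    {x : SigmaA N A | ∃ h : A i (x.val 0) = true, prepend i x h ∈ E} =
      branch i ⁻¹' E ∩ branchDomain i := by
  ext x
  constructor
  · rintro ⟨h, hE⟩
    exact ⟨by rwa [mem_preimage, branch_of_mem h], h⟩
  · rintro ⟨hE, h⟩
    exact ⟨h, by rwa [mem_preimage, branch_of_mem h] at hE⟩

end Branch

/-! ### The Jacobian and the weights of the transfer formula -/

section Jacobian

variable {m : Measure (SigmaA N A)} {Jm : Fin N → SigmaA N A → ℝ}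

lemma measurable_of_lipWithD_inv {θ gLip : ℝ} (h0 : 0 ≤ θ) (h1 : θ < 1)
    (hJLip : ∀ i, LipWithD (dTheta θ) gLip fun x => (Jm i x)⁻¹) (i : Fin N) :
    Measurable (Jm i) := by
  simpa only [inv_inv] using ((hJLip i).continuous h0 h1).measurable.fun_inv

lemma IsJacobian.map_branch (hJ : IsJacobian m Jm) (i : Fin N) :
    (m.restrict (branchDomain i)).map (branch i) =
      (m.restrict {x | x.val 0 = i}).withDensity fun x => ENNReal.ofReal (Jm i x) := by
  ext E hE
  rw [Measure.map_apply (measurable_branch i) hE, Measure.restrict_apply (measurable_branch i hE),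
    withDensity_apply _ hE, Measure.restrict_restrict hE, ← hJ i E hE, setOf_exists_prepend_mem]

lemma IsJacobian.quasiMeasurePreserving_branch (hJ : IsJacobian m Jm) (i : Fin N) :
    Measure.QuasiMeasurePreserving (branch i) (m.restrict (branchDomain i)) m := by
  refine ⟨measurable_branch i, ?_⟩
  rw [hJ.map_branch]
  exact (withDensity_absolutelyContinuous _ _).trans Measure.restrict_le_self.absolutelyContinuous

lemma IsJacobian.ae_branch (hJ : IsJacobian m Jm) {p : SigmaA N A → Prop} (hp : ∀ᵐ x ∂m, p x) :
    ∀ᵐ x ∂m, ∀ i, x ∈ branchDomain i → p (branch i x) := by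
  refine ae_all_iff.2 fun i => ?_
  rw [← ae_restrict_iff' (measurableSet_branchDomain i)]
  exact (hJ.quasiMeasurePreserving_branch i).ae hp

lemma IsJacobian.ae_prod_branch [SFinite m] (hJ : IsJacobian m Jm)
    {p : SigmaA N A × SigmaA N A → Prop} (hp : ∀ᵐ q ∂m.prod m, p q) :
    ∀ᵐ q ∂m.prod m, ∀ i, q.1 ∈ branchDomain i → q.2 ∈ branchDomain i →
      p (branch i q.1, branch i q.2) := by
  refine ae_all_iff.2 fun i => ?_
  have hbranch := hJ.quasiMeasurePreserving_branch i
  have hrestrict := (QuasiMeasurePreserving.prodMap hbranch hbranch).ae hp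
  rw [Measure.prod_restrict, ae_restrict_iff'
    ((measurableSet_branchDomain i).prod (measurableSet_branchDomain i))] at hrestrict
  filter_upwards [hrestrict] with q hq h1 h2
  exact hq ⟨h1, h2⟩

lemma IsJacobian.ae_pos (hJ : IsJacobian m Jm) (hσ : MeasurePreserving shift m m) {i : Fin N}
    (hJi : Measurable (Jm i)) :
    ∀ᵐ x ∂m.restrict {x : SigmaA N A | x.val 0 = i}, 0 < Jm i x := by
  set E := {x : SigmaA N A | Jm i x ≤ 0}
  have hE : MeasurableSet E := hJi measurableSet_Iic
  have himage : m (branch i ⁻¹' E ∩ branchDomain i) = 0 := by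
    rw [← setOf_exists_prepend_mem, hJ i E hE]
    exact (setLIntegral_congr_fun (hE.inter (measurableSet_head_eq i))
      fun x hx => ENNReal.ofReal_of_nonpos hx.1).trans lintegral_zero
  simp only [ae_iff, not_lt]
  rw [Measure.restrict_apply hE]
  refine measure_mono_null ?_ (hσ.quasiMeasurePreserving.preimage_null himage)
  rintro x ⟨hx, rfl⟩
  exact ⟨by rwa [mem_preimage, branch_shift], shift_mem_branchDomain x⟩

/-- The weight `1_{σ([i])}(γ) g_i(iγ)` of the transfer formula. -/
noncomputable def branchWeight (Jm : Fin N → SigmaA N A → ℝ) (i : Fin N) : SigmaA N A → ℝ≥0∞ :=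
  (branchDomain i).indicator fun γ => ENNReal.ofReal (Jm i (branch i γ))⁻¹

lemma branchWeight_ne_top (Jm : Fin N → SigmaA N A → ℝ) (i : Fin N) (γ : SigmaA N A) :
    branchWeight Jm i γ ≠ ⊤ := by
  by_cases h : γ ∈ branchDomain i <;> simp [branchWeight, h]

lemma measurable_branchWeight {i : Fin N} (hJi : Measurable (Jm i)) :
    Measurable (branchWeight Jm i) :=
  (hJi.inv.ennreal_ofReal.comp (measurable_branch i)).indicator (measurableSet_branchDomain i)

lemma lintegral_branchWeight_mul_comp_branch (hJ : IsJacobian m Jm)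
    (hσ : MeasurePreserving shift m m) {i : Fin N} (hJi : Measurable (Jm i))
    {f : SigmaA N A → ℝ≥0∞} (hf : Measurable f) :
    ∫⁻ γ, branchWeight Jm i γ * f (branch i γ) ∂m = ∫⁻ x in {x | x.val 0 = i}, f x ∂m := by
  have hg : Measurable fun x => ENNReal.ofReal (Jm i x)⁻¹ * f x := hJi.inv.ennreal_ofReal.mul hf
  calc ∫⁻ γ, branchWeight Jm i γ * f (branch i γ) ∂m
      = ∫⁻ γ in branchDomain i, ENNReal.ofReal (Jm i (branch i γ))⁻¹ * f (branch i γ) ∂m := by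
        rw [← lintegral_indicator (measurableSet_branchDomain i)]
        simp only [branchWeight, indicator_mul_left]
    _ = ∫⁻ x, ENNReal.ofReal (Jm i x)⁻¹ * f x
          ∂(m.restrict {x | x.val 0 = i}).withDensity fun x => ENNReal.ofReal (Jm i x) := by
        rw [← hJ.map_branch, lintegral_map hg (measurable_branch i)]
    _ = ∫⁻ x in {x | x.val 0 = i}, ENNReal.ofReal (Jm i x) * (ENNReal.ofReal (Jm i x)⁻¹ * f x)
          ∂m :=
        lintegral_withDensity_eq_lintegral_mul _ hJi.ennreal_ofReal hg
    _ = ∫⁻ x in {x | x.val 0 = i}, f x ∂m := by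
        refine lintegral_congr_ae ?_
        filter_upwards [hJ.ae_pos hσ hJi] with x hx
        rw [← mul_assoc, ← ENNReal.ofReal_mul hx.le, mul_inv_cancel₀ hx.ne', ENNReal.ofReal_one,
          one_mul]

lemma lintegral_sum_branchWeight_mul_comp_branch (hJ : IsJacobian m Jm)
    (hσ : MeasurePreserving shift m m) (hJm : ∀ i, Measurable (Jm i))
    {f : SigmaA N A → ℝ≥0∞} (hf : Measurable f) :
    ∫⁻ γ, ∑ i, branchWeight Jm i γ * f (branch i γ) ∂m = ∫⁻ x, f x ∂m := by
  have hcover : ⋃ i, {x : SigmaA N A | x.val 0 = i} = univ := by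
    ext x; simp
  have hdisjoint : Pairwise fun i j =>
      Disjoint {x : SigmaA N A | x.val 0 = i} {x | x.val 0 = j} :=
    fun i j hij => disjoint_left.2 fun x hi hj => hij (hi.symm.trans hj)
  have hterm (i : Fin N) : Measurable fun γ => branchWeight Jm i γ * f (branch i γ) :=
    (measurable_branchWeight (hJm i)).mul (hf.comp (measurable_branch i))
  rw [lintegral_finsetSum _ fun i _ => hterm i,
    ← setLIntegral_univ f, ← hcover, lintegral_iUnion measurableSet_head_eq hdisjoint,
    tsum_fintype]
  exact Finset.sum_congr rfl fun i _ => lintegral_branchWeight_mul_comp_branch hJ hσ (hJm i) hf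

lemma ae_sum_branchWeight_eq_one [SigmaFinite m] (hJ : IsJacobian m Jm)
    (hσ : MeasurePreserving shift m m) (hJm : ∀ i, Measurable (Jm i)) :
    ∀ᵐ γ ∂m, ∑ i, branchWeight Jm i γ = 1 := by
  refine ae_eq_of_forall_setLIntegral_eq_of_sigmaFinite
    (Finset.measurable_fun_sum _ fun i _ => measurable_branchWeight (hJm i)) measurable_const
    fun B hB _ => ?_
  let f : SigmaA N A → ℝ≥0∞ := B.indicator 1
  have hf : Measurable f := measurable_one.indicator hB
  have hweight (i : Fin N) (γ : SigmaA N A) :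
      branchWeight Jm i γ * f (shift (branch i γ)) = branchWeight Jm i γ * f γ := by
    by_cases h : γ ∈ branchDomain i
    · rw [shift_branch h]
    · simp [branchWeight, h]
  calc ∫⁻ γ in B, ∑ i, branchWeight Jm i γ ∂m
      = ∫⁻ γ, ∑ i, branchWeight Jm i γ * f γ ∂m := by
        rw [← lintegral_indicator hB]
        refine lintegral_congr fun γ => ?_
        by_cases h : γ ∈ B <;> simp [f, h]
    _ = ∫⁻ x, f (shift x) ∂m := by
        simp only [← hweight]
        exact lintegral_sum_branchWeight_mul_comp_branch hJ hσ hJm (hf.comp measurable_shift)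
    _ = ∫⁻ _ in B, 1 ∂m := by
        rw [hσ.lintegral_comp hf]
        exact lintegral_indicator hB _

end Jacobian

/-! ### The distance `W` between finite measures -/

section WDist

variable {Z : Type*} [MetricSpace Z] [MeasurableSpace Z]

lemma ofReal_abs_integral_le {X : Type*} [MeasurableSpace X] (ν : Measure X) {f : X → ℝ} {C : ℝ}
    (hf : ∀ x, |f x| ≤ C) :
    ENNReal.ofReal |∫ x, f x ∂ν| ≤ ENNReal.ofReal C * ν univ := by
  calc ENNReal.ofReal |∫ x, f x ∂ν|
      ≤ ∫⁻ x, ENNReal.ofReal |f x| ∂ν := by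
        simpa only [Real.enorm_eq_ofReal_abs] using enorm_integral_le_lintegral_enorm f
    _ ≤ ∫⁻ _, ENNReal.ofReal C ∂ν := lintegral_mono fun x => ENNReal.ofReal_le_ofReal (hf x)
    _ = ENNReal.ofReal C * ν univ := lintegral_const _

lemma ofReal_abs_integral_sub_le_wDist (ν₁ ν₂ : Measure Z) {g : Z → ℝ} (hg : LipschitzWith 1 g)
    (hg1 : ∀ z, |g z| ≤ 1) :
    ENNReal.ofReal |∫ z, g z ∂ν₁ - ∫ z, g z ∂ν₂| ≤ wDist ν₁ ν₂ :=
  le_iSup (fun g : {g : Z → ℝ // LipschitzWith 1 g ∧ ∀ z, |g z| ≤ 1} =>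
    ENNReal.ofReal |∫ z, g.val z ∂ν₁ - ∫ z, g.val z ∂ν₂|) ⟨g, hg, hg1⟩

lemma wDist_le_of_forall {ν₁ ν₂ : Measure Z} {C : ℝ≥0∞}
    (h : ∀ g : Z → ℝ, LipschitzWith 1 g → (∀ z, |g z| ≤ 1) →
      ENNReal.ofReal |∫ z, g z ∂ν₁ - ∫ z, g z ∂ν₂| ≤ C) :
    wDist ν₁ ν₂ ≤ C :=
  iSup_le fun g => h g.val g.prop.1 g.prop.2

lemma wDist_self (ν : Measure Z) : wDist ν ν = 0 := by
  simp [wDist]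

lemma wDist_triangle (ν₁ ν₂ ν₃ : Measure Z) : wDist ν₁ ν₃ ≤ wDist ν₁ ν₂ + wDist ν₂ ν₃ := by
  refine wDist_le_of_forall fun g hg hg1 => ?_
  calc ENNReal.ofReal |∫ z, g z ∂ν₁ - ∫ z, g z ∂ν₃|
      ≤ ENNReal.ofReal |∫ z, g z ∂ν₁ - ∫ z, g z ∂ν₂|
          + ENNReal.ofReal |∫ z, g z ∂ν₂ - ∫ z, g z ∂ν₃| :=
        (ENNReal.ofReal_le_ofReal (abs_sub_le _ _ _)).trans ENNReal.ofReal_add_le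
    _ ≤ wDist ν₁ ν₂ + wDist ν₂ ν₃ :=
        add_le_add (ofReal_abs_integral_sub_le_wDist _ _ hg hg1)
          (ofReal_abs_integral_sub_le_wDist _ _ hg hg1)

lemma wDist_le_univ_add_univ (ν₁ ν₂ : Measure Z) : wDist ν₁ ν₂ ≤ ν₁ univ + ν₂ univ := by
  refine wDist_le_of_forall fun g _ hg1 => ?_
  calc ENNReal.ofReal |∫ z, g z ∂ν₁ - ∫ z, g z ∂ν₂|
      ≤ ENNReal.ofReal |∫ z, g z ∂ν₁| + ENNReal.ofReal |∫ z, g z ∂ν₂| :=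
        (ENNReal.ofReal_le_ofReal (abs_sub _ _)).trans ENNReal.ofReal_add_le
    _ ≤ ν₁ univ + ν₂ univ := by
        simpa only [ENNReal.ofReal_one, one_mul] using
          add_le_add (ofReal_abs_integral_le ν₁ hg1) (ofReal_abs_integral_le ν₂ hg1)

lemma wDist_zero_right (ν : Measure Z) [IsFiniteMeasure ν] : wDist ν 0 = ν univ := by
  refine le_antisymm (by simpa using wDist_le_univ_add_univ ν 0) ?_
  simpa [Measure.real] using
    ofReal_abs_integral_sub_le_wDist ν 0 (LipschitzWith.const' (1 : ℝ)) fun _ => abs_one.le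

lemma wDist_smul_le (c : ℝ≥0∞) (ν₁ ν₂ : Measure Z) :
    wDist (c • ν₁) (c • ν₂) ≤ c * wDist ν₁ ν₂ := by
  refine wDist_le_of_forall fun g hg hg1 => ?_
  rw [integral_smul_measure, integral_smul_measure, ← smul_sub, smul_eq_mul, abs_mul,
    ENNReal.ofReal_mul (abs_nonneg _), abs_of_nonneg ENNReal.toReal_nonneg]
  exact mul_le_mul' ENNReal.ofReal_toReal_le (ofReal_abs_integral_sub_le_wDist _ _ hg hg1)

lemma wDist_ofReal_smul_smul_le (a b : ℝ) (ν : Measure Z) :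
    wDist (ENNReal.ofReal a • ν) (ENNReal.ofReal b • ν) ≤ ENNReal.ofReal |a - b| * ν univ := by
  refine wDist_le_of_forall fun g _ hg1 => ?_
  rw [integral_smul_measure, integral_smul_measure, ← sub_smul, smul_eq_mul, abs_mul,
    ENNReal.ofReal_mul (abs_nonneg _), ENNReal.toReal_ofReal', ENNReal.toReal_ofReal']
  refine mul_le_mul' (ENNReal.ofReal_le_ofReal (abs_max_sub_max_le_abs _ _ _)) ?_
  simpa only [ENNReal.ofReal_one, one_mul] using ofReal_abs_integral_le ν hg1

variable [BorelSpace Z]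

lemma integrable_of_lipschitzWith_of_abs_le {g : Z → ℝ} {L : NNReal} {C : ℝ}
    (hg : LipschitzWith L g) (hgC : ∀ z, |g z| ≤ C) (ν : Measure Z) [IsFiniteMeasure ν] :
    Integrable g ν :=
  Integrable.of_bound hg.continuous.measurable.aestronglyMeasurable C (.of_forall hgC)

lemma wDist_sum_le {ι : Type*} (s : Finset ι) (ν₁ ν₂ : ι → Measure Z)
    [∀ i, IsFiniteMeasure (ν₁ i)] [∀ i, IsFiniteMeasure (ν₂ i)] :
    wDist (∑ i ∈ s, ν₁ i) (∑ i ∈ s, ν₂ i) ≤ ∑ i ∈ s, wDist (ν₁ i) (ν₂ i) := by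
  refine wDist_le_of_forall fun g hg hg1 => ?_
  rw [integral_finsetSum_measure fun i _ => integrable_of_lipschitzWith_of_abs_le hg hg1 (ν₁ i),
    integral_finsetSum_measure fun i _ => integrable_of_lipschitzWith_of_abs_le hg hg1 (ν₂ i),
    ← Finset.sum_sub_distrib]
  calc ENNReal.ofReal |∑ i ∈ s, (∫ z, g z ∂ν₁ i - ∫ z, g z ∂ν₂ i)|
      ≤ ENNReal.ofReal (∑ i ∈ s, |∫ z, g z ∂ν₁ i - ∫ z, g z ∂ν₂ i|) :=
        ENNReal.ofReal_le_ofReal (Finset.abs_sum_le_sum_abs _ _)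
    _ = ∑ i ∈ s, ENNReal.ofReal |∫ z, g z ∂ν₁ i - ∫ z, g z ∂ν₂ i| :=
        ENNReal.ofReal_sum_of_nonneg fun _ _ => abs_nonneg _
    _ ≤ ∑ i ∈ s, wDist (ν₁ i) (ν₂ i) :=
        Finset.sum_le_sum fun i _ => ofReal_abs_integral_sub_le_wDist _ _ hg hg1

lemma wDist_map_le {f : Z → Z} (hf : LipschitzWith 1 f) (ν₁ ν₂ : Measure Z) :
    wDist (ν₁.map f) (ν₂.map f) ≤ wDist ν₁ ν₂ := by
  refine wDist_le_of_forall fun g hg hg1 => ?_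
  have hgm := hg.continuous.measurable
  rw [integral_map hf.continuous.measurable.aemeasurable hgm.aestronglyMeasurable,
    integral_map hf.continuous.measurable.aemeasurable hgm.aestronglyMeasurable]
  have hgf : LipschitzWith 1 fun z => g (f z) := by
    simpa only [Function.comp_def, one_mul] using hg.comp hf
  exact ofReal_abs_integral_sub_le_wDist _ _ hgf fun z => hg1 (f z)

lemma wDist_map_map_le {X : Type*} [MeasurableSpace X] {f₁ f₂ : X → Z} (h₁ : Measurable f₁)
    (h₂ : Measurable f₂) {δ : ℝ} (hδ : ∀ x, dist (f₁ x) (f₂ x) ≤ δ) (ν : Measure X)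
    [IsFiniteMeasure ν] :
    wDist (ν.map f₁) (ν.map f₂) ≤ ENNReal.ofReal δ * ν univ := by
  refine wDist_le_of_forall fun g hg hg1 => ?_
  have hgm := hg.continuous.measurable
  have hint {f : X → Z} (hf : Measurable f) : Integrable (fun x => g (f x)) ν :=
    (integrable_of_lipschitzWith_of_abs_le hg hg1 (ν.map f)).comp_measurable hf
  rw [integral_map h₁.aemeasurable hgm.aestronglyMeasurable,
    integral_map h₂.aemeasurable hgm.aestronglyMeasurable, ← integral_sub (hint h₁) (hint h₂)]
  refine ofReal_abs_integral_le ν fun x => ?_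
  calc |g (f₁ x) - g (f₂ x)| = dist (g (f₁ x)) (g (f₂ x)) := (Real.dist_eq _ _).symm
    _ ≤ dist (f₁ x) (f₂ x) := by simpa using hg.dist_le_mul (f₁ x) (f₂ x)
    _ ≤ δ := hδ x

lemma wDist_ofReal_smul_map_le {f₁ f₂ : Z → Z} (h₁ : LipschitzWith 1 f₁) (h₂ : Measurable f₂)
    {δ : ℝ} (hδ : ∀ z, dist (f₁ z) (f₂ z) ≤ δ) (c₁ c₂ : ℝ) (ν₁ ν₂ : Measure Z)
    [IsFiniteMeasure ν₂] :
    wDist (ENNReal.ofReal c₁ • ν₁.map f₁) (ENNReal.ofReal c₂ • ν₂.map f₂) ≤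
      ENNReal.ofReal c₁ * (wDist ν₁ ν₂ + ENNReal.ofReal δ * ν₂ univ) +
        ENNReal.ofReal |c₁ - c₂| * ν₂ univ := by
  have hmap : wDist (ν₁.map f₁) (ν₂.map f₂) ≤ wDist ν₁ ν₂ + ENNReal.ofReal δ * ν₂ univ :=
    (wDist_triangle _ (ν₂.map f₁) _).trans (add_le_add (wDist_map_le h₁ _ _)
      (wDist_map_map_le h₁.continuous.measurable h₂ hδ ν₂))
  have hmass : ν₂.map f₂ univ = ν₂ univ := by
    rw [Measure.map_apply h₂ .univ, preimage_univ]
  refine (wDist_triangle _ (ENNReal.ofReal c₁ • ν₂.map f₂) _).trans (add_le_add ?_ ?_)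
  · exact (wDist_smul_le _ _ _).trans (mul_le_mul_right hmap _)
  · exact hmass ▸ wDist_ofReal_smul_smul_le c₁ c₂ (ν₂.map f₂)

end WDist

/-! ### One application of the transfer formula -/

lemma CondG1.lipschitzWith_one {Z : Type*} [MetricSpace Z] {G : SigmaA N A × Z → Z} {α : ℝ}
    (hα : α ≤ 1) (hG : CondG1 G α) (x : SigmaA N A) : LipschitzWith 1 fun z => G (x, z) :=
  LipschitzWith.of_dist_le_mul fun z₁ z₂ =>
    (hG x z₁ z₂).trans (mul_le_mul_of_nonneg_right hα dist_nonneg)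

section TransferPath

variable {Z : Type*} [MeasurableSpace Z] {m : Measure (SigmaA N A)}
  {Jm : Fin N → SigmaA N A → ℝ} {G : SigmaA N A × Z → Z} {T : SigmaA N A → Measure Z}

/-- The `i`-th summand of the transfer formula at `γ`, written with the total inverse branch. -/
noncomputable def branchPush (G : SigmaA N A × Z → Z) (Jm : Fin N → SigmaA N A → ℝ)
    (T : SigmaA N A → Measure Z) (i : Fin N) (γ : SigmaA N A) : Measure Z :=
  branchWeight Jm i γ • (T (branch i γ)).map fun z => G (branch i γ, z)

instance isFiniteMeasure_branchPush [∀ γ, IsFiniteMeasure (T γ)] (i : Fin N) (γ : SigmaA N A) :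
    IsFiniteMeasure (branchPush G Jm T i γ) :=
  Measure.smul_finite _ (branchWeight_ne_top Jm i γ)

lemma branchPush_of_notMem {i : Fin N} {γ : SigmaA N A} (h : γ ∉ branchDomain i) :
    branchPush G Jm T i γ = 0 := by
  rw [branchPush, branchWeight, indicator_of_notMem h, zero_smul]

lemma transferPath_eq_sum_branchPush (G : SigmaA N A × Z → Z) (Jm : Fin N → SigmaA N A → ℝ)
    (T : SigmaA N A → Measure Z) (γ : SigmaA N A) :
    transferPath G Jm T γ = ∑ i, branchPush G Jm T i γ := by
  refine Finset.sum_congr rfl fun i _ => ?_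
  by_cases h : γ ∈ branchDomain i
  · rw [branchPush, branchWeight, indicator_of_mem h, branch_of_mem h]
    exact dif_pos h
  · rw [branchPush_of_notMem h]
    exact dif_neg h

instance isFiniteMeasure_transferPath [∀ γ, IsFiniteMeasure (T γ)] (γ : SigmaA N A) :
    IsFiniteMeasure (transferPath G Jm T γ) := by
  rw [transferPath_eq_sum_branchPush]
  infer_instance

lemma transferPath_apply (hG : ∀ x, Measurable fun z => G (x, z)) (γ : SigmaA N A) {E : Set Z}
    (hE : MeasurableSet E) :
    transferPath G Jm T γ E =
      ∑ i, branchWeight Jm i γ * T (branch i γ) {z | G (branch i γ, z) ∈ E} := by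
  rw [transferPath_eq_sum_branchPush, Measure.finsetSum_apply]
  refine Finset.sum_congr rfl fun i _ => ?_
  rw [branchPush, Measure.smul_apply, smul_eq_mul, Measure.map_apply (hG _) hE]
  rfl

lemma transferPath_congr_ae (hJ : IsJacobian m Jm) {T' : SigmaA N A → Measure Z}
    (h : T' =ᵐ[m] T) : transferPath G Jm T' =ᵐ[m] transferPath G Jm T := by
  filter_upwards [hJ.ae_branch h] with γ hγ
  rw [transferPath_eq_sum_branchPush, transferPath_eq_sum_branchPush]
  refine Finset.sum_congr rfl fun i _ => ?_
  by_cases hi : γ ∈ branchDomain i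
  · rw [branchPush, branchPush, hγ i hi]
  · rw [branchPush_of_notMem hi, branchPush_of_notMem hi]

variable [MetricSpace Z]

/-- The essential supremum `‖Γ‖_∞` of the `W`-norms along a path of measures. -/
noncomputable def pathSup (m : Measure (SigmaA N A)) (T : SigmaA N A → Measure Z) : ℝ≥0∞ :=
  essSup (fun γ => wDist (T γ) 0) m

lemma pathSup_congr_ae {T' : SigmaA N A → Measure Z} (h : T' =ᵐ[m] T) :
    pathSup m T' = pathSup m T :=
  essSup_congr_ae (h.mono fun _ hγ => congrArg (wDist · 0) hγ)

lemma ae_univ_le_pathSup [∀ γ, IsFiniteMeasure (T γ)] : ∀ᵐ γ ∂m, T γ univ ≤ pathSup m T := by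
  simpa only [pathSup, wDist_zero_right] using ENNReal.ae_le_essSup (μ := m) fun γ => wDist (T γ) 0

lemma ae_transferPath_univ_le_pathSup [SigmaFinite m] (hσ : MeasurePreserving shift m m)
    (hJ : IsJacobian m Jm) (hJm : ∀ i, Measurable (Jm i)) (hG : ∀ x, Measurable fun z => G (x, z))
    [∀ γ, IsFiniteMeasure (T γ)] :
    ∀ᵐ γ ∂m, transferPath G Jm T γ univ ≤ pathSup m T := by
  filter_upwards [hJ.ae_branch (ae_univ_le_pathSup (T := T)), ae_sum_branchWeight_eq_one hJ hσ hJm]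
    with γ hmass hsum
  calc transferPath G Jm T γ univ
      = ∑ i, branchWeight Jm i γ * T (branch i γ) univ := transferPath_apply hG γ .univ
    _ ≤ ∑ i, branchWeight Jm i γ * pathSup m T := by
        refine Finset.sum_le_sum fun i _ => ?_
        by_cases hi : γ ∈ branchDomain i
        · exact mul_le_mul_right (hmass i hi) _
        · simp [branchWeight, hi]
    _ = pathSup m T := by rw [← Finset.sum_mul, hsum, one_mul]

lemma pathSup_transferPath_le [SigmaFinite m] (hσ : MeasurePreserving shift m m)
    (hJ : IsJacobian m Jm) (hJm : ∀ i, Measurable (Jm i)) (hG : ∀ x, Measurable fun z => G (x, z))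
    [∀ γ, IsFiniteMeasure (T γ)] :
    pathSup m (transferPath G Jm T) ≤ pathSup m T := by
  refine essSup_le_of_ae_le _ ?_
  filter_upwards [ae_transferPath_univ_le_pathSup hσ hJ hJm hG (T := T)] with γ hγ
  rwa [wDist_zero_right]

section PathLip

variable {θ : ℝ}

lemma pathLip_congr_ae [SFinite m] {T' : SigmaA N A → Measure Z} (h : T' =ᵐ[m] T) :
    pathLip m θ T' = pathLip m θ T := by
  refine essSup_congr_ae ?_
  filter_upwards [Measure.quasiMeasurePreserving_fst.ae h, Measure.quasiMeasurePreserving_snd.ae h]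
    with p h1 h2
  rw [h1, h2]

lemma pathLip_le_of_ae {C : ℝ≥0∞}
    (h : ∀ᵐ p ∂m.prod m, wDist (T p.1) (T p.2) ≤ C * ENNReal.ofReal (dTheta θ p.1 p.2)) :
    pathLip m θ T ≤ C :=
  essSup_le_of_ae_le _ (h.mono fun _ hp => ENNReal.div_le_of_le_mul hp)

lemma ae_wDist_le_pathLip_mul (h0 : 0 < θ) (h1 : θ < 1) (m : Measure (SigmaA N A))
    (T : SigmaA N A → Measure Z) :
    ∀ᵐ p ∂m.prod m,
      wDist (T p.1) (T p.2) ≤ pathLip m θ T * ENNReal.ofReal (dTheta θ p.1 p.2) := by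
  filter_upwards [ENNReal.ae_le_essSup (μ := m.prod m) fun p : SigmaA N A × SigmaA N A =>
    wDist (T p.1) (T p.2) / ENNReal.ofReal (dTheta θ p.1 p.2)] with p hp
  by_cases h : p.1 = p.2
  · rw [h, wDist_self]
    exact zero_le
  · have hpos : ENNReal.ofReal (dTheta θ p.1 p.2) ≠ 0 := by simpa using dTheta_pos h0 h1 h
    rwa [ENNReal.div_le_iff hpos ENNReal.ofReal_ne_top] at hp

lemma wDist_le_of_head_ne (h0 : 0 ≤ θ) (h1 : θ < 1) {x y : SigmaA N A}
    (hxy : x.val 0 ≠ y.val 0) {S : ℝ≥0∞} (hx : T x univ ≤ S) (hy : T y univ ≤ S) :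
    wDist (T x) (T y) ≤ ENNReal.ofReal 2 * S * ENNReal.ofReal (dTheta θ x y) := by
  calc wDist (T x) (T y) ≤ S + S := (wDist_le_univ_add_univ _ _).trans (add_le_add hx hy)
    _ = ENNReal.ofReal 2 * S := by rw [← two_mul, ENNReal.ofReal_ofNat]
    _ ≤ ENNReal.ofReal 2 * S * ENNReal.ofReal (dTheta θ x y) :=
        le_mul_of_one_le_right zero_le (ENNReal.one_le_ofReal.2 (one_le_dTheta h0 h1 hxy))

variable [BorelSpace Z] {H gLip : ℝ}

lemma wDist_branchPush_le (h0 : 0 ≤ θ) (h1 : θ < 1) (hG : ∀ x, LipschitzWith 1 fun z => G (x, z))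
    (hG2 : CondG2 θ G H) {i : Fin N} (hJi : LipWithD (dTheta θ) gLip fun x => (Jm i x)⁻¹)
    {x y : SigmaA N A} (hx : x ∈ branchDomain i) (hy : y ∈ branchDomain i)
    [∀ γ, IsFiniteMeasure (T γ)] :
    wDist (branchPush G Jm T i x) (branchPush G Jm T i y) ≤
      branchWeight Jm i x * (wDist (T (branch i x)) (T (branch i y)) +
          ENNReal.ofReal (H * (θ * dTheta θ x y)) * T (branch i y) univ) +
        ENNReal.ofReal (gLip * (θ * dTheta θ x y)) * T (branch i y) univ := by
  have hfibre (z : Z) : dist (G (branch i x, z)) (G (branch i y, z)) ≤ H * (θ * dTheta θ x y) :=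
    dTheta_branch h0 h1 hx hy ▸ hG2 z (branch i x) (branch i y)
  have hweight : |(Jm i (branch i x))⁻¹ - (Jm i (branch i y))⁻¹| ≤ gLip * (θ * dTheta θ x y) :=
    dTheta_branch h0 h1 hx hy ▸ hJi (branch i x) (branch i y)
  rw [branchPush, branchPush, branchWeight, indicator_of_mem hx, indicator_of_mem hy]
  refine (wDist_ofReal_smul_map_le (hG _) (hG _).continuous.measurable hfibre _ _ _ _).trans ?_
  gcongr

lemma wDist_branchPush_le_of_head_eq (h0 : 0 ≤ θ) (h1 : θ < 1)
    (hG : ∀ x, LipschitzWith 1 fun z => G (x, z)) (hG2 : CondG2 θ G H) {i : Fin N}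
    (hJi : LipWithD (dTheta θ) gLip fun x => (Jm i x)⁻¹) [∀ γ, IsFiniteMeasure (T γ)]
    {x y : SigmaA N A} (hxy : x.val 0 = y.val 0) {L S : ℝ≥0∞}
    (hL : x ∈ branchDomain i → y ∈ branchDomain i →
      wDist (T (branch i x)) (T (branch i y)) ≤
        L * ENNReal.ofReal (dTheta θ (branch i x) (branch i y)))
    (hS : y ∈ branchDomain i → T (branch i y) univ ≤ S) :
    wDist (branchPush G Jm T i x) (branchPush G Jm T i y) ≤
      branchWeight Jm i x * (L * ENNReal.ofReal (θ * dTheta θ x y) +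
          ENNReal.ofReal (H * (θ * dTheta θ x y)) * S) +
        ENNReal.ofReal (gLip * (θ * dTheta θ x y)) * S := by
  have hiff : x ∈ branchDomain i ↔ y ∈ branchDomain i := by
    rw [branchDomain, mem_ofPred_eq, mem_ofPred_eq, hxy]
  by_cases hx : x ∈ branchDomain i
  · have hy := hiff.1 hx
    have hLi := hL hx hy
    rw [dTheta_branch h0 h1 hx hy] at hLi
    have hSi := hS hy
    refine (wDist_branchPush_le h0 h1 hG hG2 hJi hx hy).trans ?_
    gcongr
  · rw [branchPush_of_notMem hx, branchPush_of_notMem (mt hiff.2 hx), wDist_self]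
    exact zero_le

lemma wDist_transferPath_le_of_head_eq [Nonempty Z] (h0 : 0 ≤ θ) (h1 : θ < 1)
    (hG : ∀ x, LipschitzWith 1 fun z => G (x, z)) (hG2 : CondG2 θ G H)
    (hJLip : ∀ i, LipWithD (dTheta θ) gLip fun x => (Jm i x)⁻¹) [∀ γ, IsFiniteMeasure (T γ)]
    {x y : SigmaA N A} (hxy : x.val 0 = y.val 0) (hsum : ∑ i, branchWeight Jm i x = 1)
    {L S : ℝ≥0∞}
    (hL : ∀ i, x ∈ branchDomain i → y ∈ branchDomain i →
      wDist (T (branch i x)) (T (branch i y)) ≤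
        L * ENNReal.ofReal (dTheta θ (branch i x) (branch i y)))
    (hS : ∀ i, y ∈ branchDomain i → T (branch i y) univ ≤ S) :
    wDist (transferPath G Jm T x) (transferPath G Jm T y) ≤
      (ENNReal.ofReal θ * L + ENNReal.ofReal (H * θ + θ * N * gLip) * S) *
        ENNReal.ofReal (dTheta θ x y) := by
  set d := dTheta θ x y
  have hHd : 0 ≤ H * (θ * d) := by
    obtain ⟨z⟩ := ‹Nonempty Z›
    linarith [mul_nonneg h0 (dist_nonneg.trans (hG2 z x y))]
  have hgd : 0 ≤ gLip * (θ * d) := by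
    linarith [mul_nonneg h0 ((abs_nonneg _).trans (hJLip (x.val 0) x y))]
  have hconst : ENNReal.ofReal (H * (θ * d)) + N * ENNReal.ofReal (gLip * (θ * d)) =
      ENNReal.ofReal (H * θ + θ * N * gLip) * ENNReal.ofReal d := by
    rw [← ENNReal.ofReal_natCast, ← ENNReal.ofReal_mul (Nat.cast_nonneg N),
      ← ENNReal.ofReal_add hHd (mul_nonneg (Nat.cast_nonneg N) hgd),
      ← ENNReal.ofReal_mul' (dTheta_nonneg h0 x y)]
    congr 1
    ring
  rw [transferPath_eq_sum_branchPush, transferPath_eq_sum_branchPush]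
  calc wDist (∑ i, branchPush G Jm T i x) (∑ i, branchPush G Jm T i y)
      ≤ ∑ i, wDist (branchPush G Jm T i x) (branchPush G Jm T i y) := wDist_sum_le _ _ _
    _ ≤ ∑ i, (branchWeight Jm i x *
            (L * ENNReal.ofReal (θ * d) + ENNReal.ofReal (H * (θ * d)) * S) +
          ENNReal.ofReal (gLip * (θ * d)) * S) :=
        Finset.sum_le_sum fun i _ =>
          wDist_branchPush_le_of_head_eq h0 h1 hG hG2 (hJLip i) hxy (hL i) (hS i)
    _ = L * ENNReal.ofReal (θ * d) +
          (ENNReal.ofReal (H * (θ * d)) + N * ENNReal.ofReal (gLip * (θ * d))) * S := by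
        rw [Finset.sum_add_distrib, ← Finset.sum_mul, hsum, Finset.sum_const, Finset.card_univ,
          Fintype.card_fin, nsmul_eq_mul]
        ring
    _ = (ENNReal.ofReal θ * L + ENNReal.ofReal (H * θ + θ * N * gLip) * S) *
          ENNReal.ofReal d := by
        rw [hconst, ENNReal.ofReal_mul h0]
        ring

lemma pathLip_transferPath_le [Nonempty Z] [SigmaFinite m] (h0 : 0 < θ) (h1 : θ < 1)
    (hσ : MeasurePreserving shift m m) (hJ : IsJacobian m Jm) (hJm : ∀ i, Measurable (Jm i))
    (hG : ∀ x, LipschitzWith 1 fun z => G (x, z)) (hG2 : CondG2 θ G H)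
    (hJLip : ∀ i, LipWithD (dTheta θ) gLip fun x => (Jm i x)⁻¹) [∀ γ, IsFiniteMeasure (T γ)] :
    pathLip m θ (transferPath G Jm T) ≤ ENNReal.ofReal θ * pathLip m θ T +
      ENNReal.ofReal (max (H * θ + θ * N * gLip) 2) * pathSup m T := by
  have hmass := ae_transferPath_univ_le_pathSup (T := T) hσ hJ hJm
    fun x => (hG x).continuous.measurable
  refine pathLip_le_of_ae ?_
  filter_upwards [hJ.ae_prod_branch (ae_wDist_le_pathLip_mul h0 h1 m T),
    Measure.quasiMeasurePreserving_fst.ae hmass, Measure.quasiMeasurePreserving_snd.ae hmass,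
    Measure.quasiMeasurePreserving_fst.ae (ae_sum_branchWeight_eq_one hJ hσ hJm),
    Measure.quasiMeasurePreserving_snd.ae (hJ.ae_branch (ae_univ_le_pathSup (T := T)))]
    with p hL hx hy hsum hS
  by_cases hhead : p.1.val 0 = p.2.val 0
  · refine (wDist_transferPath_le_of_head_eq h0.le h1 hG hG2 hJLip hhead hsum hL hS).trans ?_
    gcongr
    exact le_max_left _ _
  · refine (wDist_le_of_head_ne h0.le h1 hhead hx hy).trans (mul_le_mul_left ?_ _)
    refine le_add_of_nonneg_of_le zero_le ?_
    gcongr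
    exact le_max_right _ _

end PathLip

end TransferPath

/-! ### Disintegrations -/

section Disintegration

variable {Z : Type*} [MeasurableSpace Z] {m : Measure (SigmaA N A)}
  {μ : Measure (SigmaA N A × Z)} {T : SigmaA N A → Measure Z}

lemma IsDisint.fst_eq_withDensity (hT : IsDisint m μ T) :
    μ.fst = m.withDensity fun γ => T γ univ := by
  ext B hB
  rw [Measure.fst_apply hB, hT.1 _ (measurable_fst hB), withDensity_apply _ hB,
    ← lintegral_indicator hB]
  refine lintegral_congr fun γ => ?_
  by_cases hγ : γ ∈ B <;> simp [hγ]

lemma IsDisint.ae_univ_lt_top [IsFiniteMeasure μ] (hT : IsDisint m μ T) :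
    ∀ᵐ γ ∂m, T γ univ < ⊤ := by
  refine ae_lt_top (hT.2 univ .univ) ?_
  rw [← setLIntegral_univ, ← withDensity_apply _ .univ, ← hT.fst_eq_withDensity]
  exact measure_ne_top _ _

lemma IsDisint.exists_isFiniteMeasure [IsFiniteMeasure μ] (hT : IsDisint m μ T) :
    ∃ T' : SigmaA N A → Measure Z,
      IsDisint m μ T' ∧ (∀ γ, IsFiniteMeasure (T' γ)) ∧ T' =ᵐ[m] T := by
  set B : Set (SigmaA N A) := {γ | T γ univ < ⊤}
  have hB : MeasurableSet B := hT.2 univ .univ measurableSet_Iio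
  have hae : B.indicator T =ᵐ[m] T :=
    hT.ae_univ_lt_top.mono fun γ hγ => indicator_of_mem (s := B) hγ T
  refine ⟨B.indicator T, ⟨fun E hE => ?_, fun E hE => ?_⟩, fun γ => ?_, hae⟩
  · rw [hT.1 E hE]
    exact lintegral_congr_ae (hae.mono fun γ hγ =>
      congrArg (fun ν : Measure Z => ν {z | (γ, z) ∈ E}) hγ.symm)
  · convert (hT.2 E hE).indicator hB using 1
    ext γ
    by_cases hγ : γ ∈ B <;> simp [hγ]
  · by_cases hγ : γ ∈ B
    · exact ⟨by rwa [indicator_of_mem hγ]⟩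
    · rw [indicator_of_notMem hγ]
      infer_instance

lemma measurable_apply_section [∀ γ, IsFiniteMeasure (T γ)]
    (hT : ∀ E : Set Z, MeasurableSet E → Measurable fun γ => T γ E)
    {E : Set (SigmaA N A × Z)} (hE : MeasurableSet E) :
    Measurable fun γ => T γ {z | (γ, z) ∈ E} :=
  ProbabilityTheory.Kernel.measurable_kernel_prodMk_left_of_finite
    (κ := ⟨T, Measure.measurable_of_measurable_coe _ hT⟩) hE inferInstance

variable {G : SigmaA N A × Z → Z} {Jm : Fin N → SigmaA N A → ℝ}

lemma measurable_skew (hG : Measurable G) : Measurable (skew G) :=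
  (measurable_shift.comp measurable_fst).prodMk hG

lemma IsDisint.map_skew (hσ : MeasurePreserving shift m m) (hJ : IsJacobian m Jm)
    (hJm : ∀ i, Measurable (Jm i)) (hG : Measurable G) [∀ γ, IsFiniteMeasure (T γ)]
    (hT : IsDisint m μ T) : IsDisint m (μ.map (skew G)) (transferPath G Jm T) := by
  have hGfibre (x : SigmaA N A) : Measurable fun z => G (x, z) := hG.comp measurable_prodMk_left
  refine ⟨fun E hE => ?_, fun E hE => ?_⟩
  · have hE' := measurable_skew hG hE
    rw [Measure.map_apply (measurable_skew hG) hE, hT.1 _ hE',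
      ← lintegral_sum_branchWeight_mul_comp_branch hJ hσ hJm (measurable_apply_section hT.2 hE')]
    refine lintegral_congr fun γ => ?_
    have hsection : MeasurableSet {z | (γ, z) ∈ E} := measurable_prodMk_left hE
    rw [transferPath_apply hGfibre γ hsection]
    refine Finset.sum_congr rfl fun i _ => ?_
    by_cases hi : γ ∈ branchDomain i
    · simp only [mem_preimage, skew, shift_branch hi, mem_ofPred_eq]
    · simp [branchWeight, hi]
  · simp only [transferPath_apply hGfibre _ hE]
    exact Finset.measurable_fun_sum _ fun i _ => (measurable_branchWeight (hJm i)).mul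
      ((measurable_apply_section hT.2 (hG hE)).comp (measurable_branch i))

variable [MetricSpace Z]

lemma lipDisint_le_pathLip {θ : ℝ} (hT : IsDisint m μ T) : lipDisint m θ μ ≤ pathLip m θ T :=
  iInf_le (fun T : {T : SigmaA N A → Measure Z // IsDisint m μ T} => pathLip m θ T.val) ⟨T, hT⟩

lemma IsDisint.pathSup_eq [SigmaFinite m] [IsFiniteMeasure μ] (hT : IsDisint m μ T) :
    pathSup m T = essSup (μ.fst.rnDeriv m) m := by
  have hrnDeriv : μ.fst.rnDeriv m =ᵐ[m] fun γ => T γ univ :=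
    hT.fst_eq_withDensity ▸ Measure.rnDeriv_withDensity _ (hT.2 univ .univ)
  refine essSup_congr_ae ?_
  filter_upwards [hT.ae_univ_lt_top, hrnDeriv] with γ hfin hγ
  have : IsFiniteMeasure (T γ) := ⟨hfin⟩
  rw [wDist_zero_right, hγ]

lemma essSup_wDist_fiberR_zero [CompactSpace Z] [Nonempty Z] [BorelSpace Z] [SigmaFinite m]
    (μ : Measure (SigmaA N A × Z)) [hμ : IsFiniteMeasure μ] :
    essSup (fun γ => wDist (fiberR m μ γ) 0) m = essSup (μ.fst.rnDeriv m) m := by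
  refine essSup_congr_ae ?_
  filter_upwards [Measure.rnDeriv_lt_top μ.fst m] with γ hγ
  have : IsFiniteMeasure (μ.fst.rnDeriv m γ • μ.condKernel γ) := Measure.smul_finite _ hγ.ne
  rw [fiberR, dif_pos hμ, wDist_zero_right]
  simp

end Disintegration

/-! ### Iteration -/

section Iterate

lemma le_ofReal_pow_mul_add_of_le_mul_add {a : ℕ → ℝ≥0∞} {r c : ℝ} {S : ℝ≥0∞} (h0 : 0 ≤ r)
    (h1 : r < 1) (hc : 0 ≤ c)
    (h : ∀ n, a (n + 1) ≤ ENNReal.ofReal r * a n + ENNReal.ofReal c * S) (n : ℕ) :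
    a n ≤ ENNReal.ofReal (r ^ n) * a 0 + ENNReal.ofReal (c / (1 - r)) * S := by
  have hr : 0 < 1 - r := sub_pos.2 h1
  have hfix : ENNReal.ofReal r * ENNReal.ofReal (c / (1 - r)) + ENNReal.ofReal c =
      ENNReal.ofReal (c / (1 - r)) := by
    rw [← ENNReal.ofReal_mul h0, ← ENNReal.ofReal_add (by positivity) hc]
    congr 1
    field_simp
    ring
  induction n with
  | zero => simp
  | succ n ih =>
    calc a (n + 1)
        ≤ ENNReal.ofReal r * a n + ENNReal.ofReal c * S := h n
      _ ≤ ENNReal.ofReal r * (ENNReal.ofReal (r ^ n) * a 0 + ENNReal.ofReal (c / (1 - r)) * S) +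
            ENNReal.ofReal c * S := by gcongr
      _ = ENNReal.ofReal r * ENNReal.ofReal (r ^ n) * a 0 +
            (ENNReal.ofReal r * ENNReal.ofReal (c / (1 - r)) + ENNReal.ofReal c) * S := by ring
      _ = ENNReal.ofReal (r ^ (n + 1)) * a 0 + ENNReal.ofReal (c / (1 - r)) * S := by
        rw [hfix, ← ENNReal.ofReal_mul h0, pow_succ']

variable {Z : Type*} [MeasurableSpace Z] {m : Measure (SigmaA N A)}
  {Jm : Fin N → SigmaA N A → ℝ} {G : SigmaA N A × Z → Z} {T : SigmaA N A → Measure Z}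

instance isFiniteMeasure_transferPath_iterate [∀ γ, IsFiniteMeasure (T γ)] (n : ℕ)
    (γ : SigmaA N A) : IsFiniteMeasure ((transferPath G Jm)^[n] T γ) := by
  induction n generalizing γ with
  | zero => exact inferInstanceAs (IsFiniteMeasure (T γ))
  | succ n ih =>
    rw [Function.iterate_succ_apply']
    infer_instance

lemma transferPath_iterate_congr_ae (hJ : IsJacobian m Jm) {T' : SigmaA N A → Measure Z}
    (h : T' =ᵐ[m] T) (n : ℕ) : (transferPath G Jm)^[n] T' =ᵐ[m] (transferPath G Jm)^[n] T := by
  induction n with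
  | zero => exact h
  | succ n ih =>
    rw [Function.iterate_succ_apply', Function.iterate_succ_apply']
    exact transferPath_congr_ae hJ ih

lemma IsDisint.map_skew_iterate (hσ : MeasurePreserving shift m m) (hJ : IsJacobian m Jm)
    (hJm : ∀ i, Measurable (Jm i)) (hG : Measurable G) [∀ γ, IsFiniteMeasure (T γ)]
    {μ : Measure (SigmaA N A × Z)} (hT : IsDisint m μ T) (n : ℕ) :
    IsDisint m ((fun ν : Measure (SigmaA N A × Z) => ν.map (skew G))^[n] μ)
      ((transferPath G Jm)^[n] T) := by
  induction n with
  | zero => exact hT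
  | succ n ih =>
    rw [Function.iterate_succ_apply', Function.iterate_succ_apply']
    exact ih.map_skew hσ hJ hJm hG

variable [MetricSpace Z] [SigmaFinite m]

lemma pathSup_transferPath_iterate_le (hσ : MeasurePreserving shift m m) (hJ : IsJacobian m Jm)
    (hJm : ∀ i, Measurable (Jm i)) (hG : ∀ x, Measurable fun z => G (x, z))
    [∀ γ, IsFiniteMeasure (T γ)] (n : ℕ) :
    pathSup m ((transferPath G Jm)^[n] T) ≤ pathSup m T := by
  induction n with
  | zero => exact le_rfl
  | succ n ih =>
    rw [Function.iterate_succ_apply']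
    exact (pathSup_transferPath_le hσ hJ hJm hG).trans ih

variable [BorelSpace Z] [Nonempty Z] {θ H gLip : ℝ}

lemma pathLip_transferPath_iterate_le (h0 : 0 < θ) (h1 : θ < 1)
    (hσ : MeasurePreserving shift m m) (hJ : IsJacobian m Jm)
    (hG : ∀ x, LipschitzWith 1 fun z => G (x, z)) (hG2 : CondG2 θ G H)
    (hJLip : ∀ i, LipWithD (dTheta θ) gLip fun x => (Jm i x)⁻¹)
    [∀ γ, IsFiniteMeasure (T γ)] (n : ℕ) :
    pathLip m θ ((transferPath G Jm)^[n] T) ≤ ENNReal.ofReal (θ ^ n) * pathLip m θ T +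
      ENNReal.ofReal (max (H * θ + θ * N * gLip) 2 / (1 - θ)) * pathSup m T := by
  have hJm := measurable_of_lipWithD_inv h0.le h1 hJLip
  refine le_ofReal_pow_mul_add_of_le_mul_add (a := fun n => pathLip m θ ((transferPath G Jm)^[n] T))
    h0.le h1 (zero_le_two.trans (le_max_right _ _)) (fun n => ?_) n
  rw [Function.iterate_succ_apply']
  refine (pathLip_transferPath_le h0 h1 hσ hJ hJm hG hG2 hJLip).trans ?_
  gcongr
  exact pathSup_transferPath_iterate_le hσ hJ hJm (fun x => (hG x).continuous.measurable) n

end Iterate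

theorem transfer_path_lipschitz_bound_iterated_general
    {θ : ℝ} (hθ0 : 0 < θ) (hθ1 : θ < 1) {m : Measure (SigmaA N A)} [SigmaFinite m]
    (hσ : MeasurePreserving shift m m)
    {Z : Type*} [MetricSpace Z] [Nonempty Z] [MeasurableSpace Z] [BorelSpace Z]
    {G : SigmaA N A × Z → Z} (hGm : Measurable G) (hG1 : ∀ x, LipschitzWith 1 fun z => G (x, z))
    {H : ℝ} (hG2 : CondG2 θ G H) {Jm : Fin N → SigmaA N A → ℝ} (hJ : IsJacobian m Jm)
    {gLip : ℝ} (hgLip : ∀ i, LipWithD (dTheta θ) gLip fun x => (Jm i x)⁻¹)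
    (μ : Measure (SigmaA N A × Z)) [IsFiniteMeasure μ] (n : ℕ) :
    (∀ T, IsDisint m μ T →
      pathLip m θ ((transferPath G Jm)^[n] T) ≤ ENNReal.ofReal (θ ^ n) * pathLip m θ T +
        ENNReal.ofReal (max (H * θ + θ * N * gLip) 2 / (1 - θ)) *
          essSup (fun γ => wDist (T γ) 0) m) ∧
    lipDisint m θ ((fun ν : Measure (SigmaA N A × Z) => ν.map (skew G))^[n] μ) ≤
      ENNReal.ofReal (θ ^ n) * lipDisint m θ μ +
        ENNReal.ofReal (max (H * θ + θ * N * gLip) 2 / (1 - θ)) *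
          essSup (μ.fst.rnDeriv m) m := by
  have hpath {T : SigmaA N A → Measure Z} (hT : IsDisint m μ T) :
      pathLip m θ ((transferPath G Jm)^[n] T) ≤ ENNReal.ofReal (θ ^ n) * pathLip m θ T +
        ENNReal.ofReal (max (H * θ + θ * N * gLip) 2 / (1 - θ)) * pathSup m T := by
    obtain ⟨T', -, hfin, hae⟩ := hT.exists_isFiniteMeasure
    rw [← pathLip_congr_ae (transferPath_iterate_congr_ae hJ hae n), ← pathLip_congr_ae hae,
      ← pathSup_congr_ae hae]
    exact pathLip_transferPath_iterate_le hθ0 hθ1 hσ hJ hG1 hG2 hgLip n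
  refine ⟨fun T hT => hpath hT, ?_⟩
  rw [lipDisint.eq_def m θ μ, ENNReal.mul_iInf_of_ne (by simpa using pow_pos hθ0 n)
    ENNReal.ofReal_ne_top, ENNReal.iInf_add]
  refine le_iInf fun ⟨T, hT⟩ => ?_
  obtain ⟨T', hT', hfin, hae⟩ := hT.exists_isFiniteMeasure
  rw [← pathLip_congr_ae hae, ← hT'.pathSup_eq]
  exact (lipDisint_le_pathLip (hT'.map_skew_iterate hσ hJ
    (measurable_of_lipWithD_inv hθ0.le hθ1 hgLip) hGm n)).trans (hpath hT')

/-- Under (G1) and (G2), iterating the transfer formula: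
`|Γ^ω_{F^{*n}μ}|_θ^ω ≤ θ^n |μ|_θ^ω + (C₁/(1-θ)) ‖μ‖_∞` for all `n ≥ 1`;
consequently `|F^{*n}μ|_θ ≤ θ^n |μ|_θ + (C₁/(1-θ)) ‖μ‖_∞`. -/
theorem transfer_path_lipschitz_bound_iterated
    (N : ℕ) (A : Fin N → Fin N → Bool) (hA : Aperiodic A)
    (θ : ℝ) (hθ0 : 0 < θ) (hθ1 : θ < 1)
    (m : Measure (SigmaA N A)) [IsProbabilityMeasure m]
    (hmM : IsMarkov m) (hminv : m.map shift = m)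
    {K : Type*} [MetricSpace K] [CompactSpace K] [Nonempty K]
    [MeasurableSpace K] [BorelSpace K]
    (hdiam : Metric.diam (Set.univ : Set K) = 1)
    (G : SigmaA N A × K → K) (hGm : Measurable (skew G))
    (α : ℝ) (hα0 : 0 < α) (hα1 : α < 1) (hG1 : CondG1 G α)
    (H : ℝ) (hG2 : CondG2 θ G H)
    (Jm : Fin N → SigmaA N A → ℝ) (hJ : IsJacobian m Jm)
    (gLip : ℝ) (hgLip : ∀ i : Fin N, LipWithD (dTheta θ) gLip fun x => (Jm i x)⁻¹)
    (μ : Measure (SigmaA N A × K)) [IsFiniteMeasure μ]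
    (hAC : μ.fst ≪ m) (hLtheta : lipDisint m θ μ < ⊤)
    (T : SigmaA N A → Measure K) (hT : IsDisint m μ T) :
    (∀ n : ℕ, 1 ≤ n →
      pathLip m θ ((transferPath G Jm)^[n] T) ≤
        ENNReal.ofReal (θ ^ n) * pathLip m θ T +
          ENNReal.ofReal (max (H * θ + θ * (N : ℝ) * gLip) 2 / (1 - θ)) *
            essSup (fun γ => wDist (T γ) 0) m) ∧
    (∀ n : ℕ, 1 ≤ n →
      lipDisint m θ ((fun ν : Measure (SigmaA N A × K) => ν.map (skew G))^[n] μ) ≤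
        ENNReal.ofReal (θ ^ n) * lipDisint m θ μ +
          ENNReal.ofReal (max (H * θ + θ * (N : ℝ) * gLip) 2 / (1 - θ)) *
            essSup (fun γ => wDist (fiberR m μ γ) 0) m) := by
  have hgeneral := transfer_path_lipschitz_bound_iterated_general hθ0 hθ1
    ⟨measurable_shift, hminv⟩ (measurable_snd.comp hGm) (hG1.lipschitzWith_one hα1.le) hG2 hJ
    hgLip μ
  rw [essSup_wDist_fiberR_zero]
  exact ⟨fun n _ => (hgeneral n).1 T hT, fun n _ => (hgeneral n).2⟩

end RDS
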